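/- arXiv:1510.00974 — 2 statements merged into one kernel-verified Lean document; each statement's English description precedes it below -/
import Mathlib

section
/- Let φ be a lower semicontinuous trace on a C*-algebra A and let e be a projection in A such that φ takes finite values on (eAe)₊. Then for every positive element x in the closed two-sided ideal AeA generated by e, one has φ(x) = sup{ φ(y) : y ∈ (eAe)₊, y ≼ x }. -/
open scoped ENNReal NNReal

/-- A `[0,∞]`-valued trace on a C*-algebra: positively homogeneous and additive on the
positive cone, and satisfying `φ (x* x) = φ (x x*)` for all `x`. -/
structure IsTrace {A : Type*} [NonUnitalCStarAlgebra A] [PartialOrder A] [StarOrderedRing A]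
    (φ : A → ℝ≥0∞) : Prop where
  smul : ∀ x : A, 0 ≤ x → ∀ α : ℝ≥0, φ ((α : ℝ) • x) = (α : ℝ≥0∞) * φ x
  add : ∀ x y : A, 0 ≤ x → 0 ≤ y → φ (x + y) = φ x + φ y
  tracial : ∀ x : A, φ (star x * x) = φ (x * star x)

/-- A trace is lower semicontinuous if for each finite `α`, the set of positive elements
with `φ x ≤ α` is closed. -/
def IsLSC {A : Type*} [NonUnitalCStarAlgebra A] [PartialOrder A] [StarOrderedRing A]
    (φ : A → ℝ≥0∞) : Prop :=
  ∀ α : ℝ≥0, IsClosed {x : A | 0 ≤ x ∧ φ x ≤ (α : ℝ≥0∞)}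

/-- `y ≼ x`: there is `x₁` with `0 ≤ x₁ ≤ x` and `y ≈ x₁`, i.e. there is a finite family
`z i` with `y = ∑ star (z i) * z i` and `x₁ = ∑ z i * star (z i)`. -/
def Subequivalent {A : Type*} [NonUnitalCStarAlgebra A] [PartialOrder A] [StarOrderedRing A]
    (y x : A) : Prop :=
  ∃ x₁ : A, 0 ≤ x₁ ∧ x₁ ≤ x ∧ ∃ (n : ℕ) (z : Fin n → A),
    y = ∑ i, star (z i) * z i ∧ x₁ = ∑ i, z i * star (z i)

/-!
Let `x` be positive in `AeA`. As `x` is a norm limit of sums `∑ aᵢ e cᵢ`, an element `u` that nearly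
fixes the finitely many `pᵢ = aᵢ e` from the left nearly fixes `x`. Functional calculus applied to
`k = ∑ pᵢ pᵢ*` gives such a `u` of the form `h k h = ∑ (h pᵢ) (h pᵢ)*` with `0 ≤ u ≤ 1`. Then
`x₁ = √x u √x = ∑ zᵢ zᵢ*`, where `zᵢ = √x h pᵢ ∈ Ae`, lies below `x`. It is also close to `x`: the
norm of a self-adjoint product `a b` is its spectral radius, which equals that of `b a`, so
`‖√x (1 - u) √x‖ ≤ ‖(1 - u) x‖`. As `x₁ ≈ ∑ zᵢ* zᵢ ∈ eAe`, this exhibits `x` as a limit of elements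
whose traces are at most the supremum, and lower semicontinuity bounds `φ x`; monotonicity of `φ`
gives the other inequality.
-/

section Algebra

lemma exists_eq_sum_mul_mul_of_mem_span_singleton {R : Type*} [NonUnitalRing R] {e w : R}
    (he : IsIdempotentElem e) (hw : w ∈ TwoSidedIdeal.span {e}) :
    ∃ (n : ℕ) (a c : Fin n → R), w = ∑ i, a i * e * c i := by
  induction hw using TwoSidedIdeal.span_induction with
  | mem w hw =>
    obtain rfl : w = e := hw
    exact ⟨1, fun _ ↦ w, fun _ ↦ w, by simp [he.eq]⟩
  | zero => exact ⟨0, 0, 0, by simp⟩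
  | add w₁ w₂ _ _ h₁ h₂ =>
    obtain ⟨n₁, a₁, c₁, rfl⟩ := h₁
    obtain ⟨n₂, a₂, c₂, rfl⟩ := h₂
    exact ⟨n₁ + n₂, Fin.append a₁ a₂, Fin.append c₁ c₂, by simp [Fin.sum_univ_add]⟩
  | neg w _ h =>
    obtain ⟨n, a, c, rfl⟩ := h
    exact ⟨n, -a, c, by simp⟩
  | left_absorb b w _ h =>
    obtain ⟨n, a, c, rfl⟩ := h
    exact ⟨n, fun i ↦ b * a i, c, by simp [Finset.mul_sum, mul_assoc]⟩
  | right_absorb b w _ h =>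
    obtain ⟨n, a, c, rfl⟩ := h
    exact ⟨n, a, fun i ↦ c i * b, by simp [Finset.sum_mul, mul_assoc]⟩

variable {R ι : Type*} [NonUnitalRing R] [StarRing R] [Fintype ι]

lemma sum_conjugate_mul_star {h : R} (hh : IsSelfAdjoint h) (p : ι → R) :
    ∑ i, h * p i * star (h * p i) = h * (∑ i, p i * star (p i)) * h := by
  simp [Finset.mul_sum, Finset.sum_mul, hh.star_eq, mul_assoc]

lemma sum_sub_mul_mul_star {u : R} (hu : IsSelfAdjoint u) (p : ι → R) :
    ∑ i, (p i - u * p i) * star (p i - u * p i) =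
      ∑ i, p i * star (p i) - u * ∑ i, p i * star (p i) -
        (∑ i, p i * star (p i) - u * ∑ i, p i * star (p i)) * u := by
  simp [Finset.mul_sum, Finset.sum_mul, hu.star_eq, mul_assoc, mul_sub, sub_mul]

lemma exists_sum_star_mul_self_eq_mul_mul {e : R} (he : IsSelfAdjoint e) {z : ι → R}
    (hz : ∀ i, z i * e = z i) : ∃ a : R, ∑ i, star (z i) * z i = e * a * e := by
  have hz' (i : ι) : e * star (z i) = star (z i) := by
    simpa [he.star_eq] using congrArg star (hz i)
  refine ⟨∑ i, star (z i) * z i, ?_⟩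
  rw [Finset.mul_sum, Finset.sum_mul]
  refine Finset.sum_congr rfl fun i _ ↦ ?_
  rw [← mul_assoc, hz', mul_assoc, hz]

end Algebra

section CStarAlgebra

variable {A : Type*} [NonUnitalCStarAlgebra A]

lemma norm_mul_le_norm_mul_swap {a b : A} (hab : IsSelfAdjoint (a * b)) :
    ‖a * b‖ ≤ ‖b * a‖ := by
  rw [← cfcₙ_id ℝ (a * b)]
  refine norm_cfcₙ_le fun t ht ↦ ?_
  rw [quasispectrum.mul_comm, Unitization.quasispectrum_eq_spectrum_inr' ℝ ℂ] at ht
  simpa only [id_eq, Unitization.norm_inr] using spectrum.norm_le_norm_of_mem ht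

section FunctionalCalculus

variable {k : A} {f : ℝ → ℝ}

lemma cfcₙ_mul_self_mul_cfcₙ (hk : IsSelfAdjoint k) (hf : ContinuousOn f (quasispectrum ℝ k))
    (hf₀ : f 0 = 0) : cfcₙ f k * k * cfcₙ f k = cfcₙ (fun t ↦ f t * t * f t) k := by
  nth_rw 2 [← cfcₙ_id' ℝ k]
  rw [← cfcₙ_mul .., ← cfcₙ_mul ..]

lemma sub_cfcₙ_mul_sub_mul_cfcₙ (hk : IsSelfAdjoint k) (hf : ContinuousOn f (quasispectrum ℝ k))
    (hf₀ : f 0 = 0) :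
    k - cfcₙ f k * k - (k - cfcₙ f k * k) * cfcₙ f k = cfcₙ (fun t ↦ t * (1 - f t) ^ 2) k := by
  have hsub : k - cfcₙ f k * k = cfcₙ (fun t ↦ t - f t * t) k := by
    rw [cfcₙ_sub .., cfcₙ_mul .., cfcₙ_id' ℝ k]
  rw [hsub, ← cfcₙ_mul .., ← cfcₙ_sub ..]
  exact cfcₙ_congr fun t _ ↦ by ring

end FunctionalCalculus

variable [PartialOrder A] [StarOrderedRing A]

namespace IsTrace

variable {φ : A → ℝ≥0∞}

lemma map_zero (hφ : IsTrace φ) : φ 0 = 0 := by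
  simpa using hφ.smul 0 le_rfl 0

lemma mono (hφ : IsTrace φ) {x y : A} (hx : 0 ≤ x) (hxy : x ≤ y) : φ x ≤ φ y := by
  have h := hφ.add x (y - x) hx (sub_nonneg.mpr hxy)
  rw [add_sub_cancel] at h
  exact h ▸ le_self_add

lemma map_sum (hφ : IsTrace φ) {ι : Type*} (s : Finset ι) {f : ι → A} (hf : ∀ i ∈ s, 0 ≤ f i) :
    φ (∑ i ∈ s, f i) = ∑ i ∈ s, φ (f i) := by
  classical
  induction s using Finset.induction_on with
  | empty => simpa using hφ.map_zero
  | insert i s hi ih =>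
    rw [Finset.forall_mem_insert] at hf
    rw [Finset.sum_insert hi, Finset.sum_insert hi, hφ.add _ _ hf.1 (Finset.sum_nonneg hf.2),
      ih hf.2]

lemma map_sum_star_mul_self (hφ : IsTrace φ) {ι : Type*} [Fintype ι] (z : ι → A) :
    φ (∑ i, star (z i) * z i) = φ (∑ i, z i * star (z i)) := by
  rw [hφ.map_sum _ fun i _ ↦ star_mul_self_nonneg (z i),
    hφ.map_sum _ fun i _ ↦ mul_star_self_nonneg (z i)]
  exact Finset.sum_congr rfl fun i _ ↦ hφ.tracial (z i)

lemma le_of_subequivalent (hφ : IsTrace φ) {x y : A} (h : Subequivalent y x) : φ y ≤ φ x := by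
  obtain ⟨x₁, hx₁, hx₁x, n, z, rfl, rfl⟩ := h
  rw [hφ.map_sum_star_mul_self]
  exact hφ.mono hx₁ hx₁x

end IsTrace

lemma IsLSC.le_of_mem_closure {φ : A → ℝ≥0∞} (hφ : IsLSC φ) {M : ℝ≥0∞} {x : A}
    (hx : x ∈ closure {y : A | 0 ≤ y ∧ φ y ≤ M}) : φ x ≤ M := by
  rcases eq_or_ne M ∞ with rfl | hM
  · exact le_top
  · lift M to ℝ≥0 using hM
    exact ((hφ M).closure_subset hx).2

lemma mul_one_sub_div_sq_sq_le {δ t : ℝ} (hδ : 0 < δ) (ht : 0 ≤ t) :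
    t * (1 - (t / (δ + t)) ^ 2) ^ 2 ≤ δ := by
  have hδt : 0 < δ + t := by positivity
  have hnonneg : 0 ≤ 1 - (t / (δ + t)) ^ 2 := by
    rw [sub_nonneg]
    exact pow_le_one₀ (by positivity) ((div_le_one hδt).mpr (by linarith))
  have hle : 1 - (t / (δ + t)) ^ 2 ≤ 2 * δ / (δ + t) := by
    have hsplit : 1 - (t / (δ + t)) ^ 2 = 2 * δ / (δ + t) - (δ / (δ + t)) ^ 2 := by
      field_simp
      ring
    linarith [sq_nonneg (δ / (δ + t))]
  calc t * (1 - (t / (δ + t)) ^ 2) ^ 2 ≤ t * (2 * δ / (δ + t)) ^ 2 := by gcongr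
    _ = δ * (4 * δ * t / (δ + t) ^ 2) := by
      field_simp
      ring
    _ ≤ δ := by
      refine mul_le_of_le_one_right hδ.le ((div_le_one (by positivity)).mpr ?_)
      linarith [sq_nonneg (δ - t)]

/-- The witness is `h = k ^ (1/2) * (δ + k)⁻¹`, so that `h * k * h = k ^ 2 * (δ + k)⁻²`. -/
lemma exists_isSelfAdjoint_norm_conjugate_le_one {k : A} (hk : 0 ≤ k) {δ : ℝ} (hδ : 0 < δ) :
    ∃ h : A, IsSelfAdjoint h ∧ ‖h * k * h‖ ≤ 1 ∧
      ‖k - h * k * h * k - (k - h * k * h * k) * (h * k * h)‖ ≤ δ := by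
  have hσ : ∀ t ∈ quasispectrum ℝ k, 0 ≤ t := quasispectrum_nonneg_of_nonneg k hk
  have hδσ : ∀ t ∈ quasispectrum ℝ k, δ + t ≠ 0 := fun t ht ↦ by linarith [hσ t ht]
  have hsa : IsSelfAdjoint k := .of_nonneg hk
  set g : ℝ → ℝ := fun t ↦ √t / (δ + t) with hg
  set f : ℝ → ℝ := fun t ↦ (t / (δ + t)) ^ 2 with hf
  have hgf : ∀ t ∈ quasispectrum ℝ k, g t * t * g t = f t := fun t ht ↦ by
    calc g t * t * g t = √t ^ 2 * t / (δ + t) ^ 2 := by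
          simp only [hg]
          field_simp
      _ = f t := by rw [Real.sq_sqrt (hσ t ht), ← sq, ← div_pow]
  have hu : cfcₙ g k * k * cfcₙ g k = cfcₙ f k := by
    rw [cfcₙ_mul_self_mul_cfcₙ hsa (by fun_prop (disch := assumption)) (by simp [hg])]
    exact cfcₙ_congr hgf
  refine ⟨cfcₙ g k, cfcₙ_predicate g k, ?_, ?_⟩
  · rw [hu]
    refine norm_cfcₙ_le fun t ht ↦ ?_
    have hδt : 0 ≤ δ + t := by linarith [hσ t ht]
    rw [Real.norm_of_nonneg (sq_nonneg _)]
    exact pow_le_one₀ (div_nonneg (hσ t ht) hδt) (div_le_one_of_le₀ (by linarith) hδt)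
  · rw [hu, sub_cfcₙ_mul_sub_mul_cfcₙ hsa (by fun_prop (disch := assumption)) (by simp [hf])]
    refine norm_cfcₙ_le fun t ht ↦ ?_
    rw [Real.norm_of_nonneg (mul_nonneg (hσ t ht) (sq_nonneg _))]
    exact mul_one_sub_div_sq_sq_le hδ (hσ t ht)

lemma exists_norm_sub_sum_mul_star_mul_le {ι : Type*} [Fintype ι] (p : ι → A) {ε : ℝ} (hε : 0 < ε) :
    ∃ h : A, ‖∑ i, h * p i * star (h * p i)‖ ≤ 1 ∧
      ∀ j, ‖p j - (∑ i, h * p i * star (h * p i)) * p j‖ ≤ ε := by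
  set k := ∑ i, p i * star (p i)
  have hk : 0 ≤ k := Finset.sum_nonneg fun i _ ↦ mul_star_self_nonneg (p i)
  obtain ⟨h, hh, hu, hdefect⟩ := exists_isSelfAdjoint_norm_conjugate_le_one hk (sq_pos_of_pos hε)
  refine ⟨h, ?_, fun j ↦ ?_⟩ <;> rw [sum_conjugate_mul_star hh]
  · exact hu
  · set u := h * k * h
    have husa : IsSelfAdjoint u := by
      simpa [hh.star_eq] using (IsSelfAdjoint.of_nonneg hk).conjugate h
    refine le_of_sq_le_sq ?_ hε.le
    calc ‖p j - u * p j‖ ^ 2 = ‖(p j - u * p j) * star (p j - u * p j)‖ := by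
          rw [CStarRing.norm_self_mul_star, sq]
      _ ≤ ‖∑ i, (p i - u * p i) * star (p i - u * p i)‖ :=
          CStarAlgebra.norm_le_norm_of_nonneg_of_le (mul_star_self_nonneg _)
            (Finset.single_le_sum (f := fun i ↦ (p i - u * p i) * star (p i - u * p i))
              (fun i _ ↦ mul_star_self_nonneg _) (Finset.mem_univ j))
      _ ≤ ε ^ 2 := by rwa [sum_sub_mul_mul_star husa]

lemma exists_norm_sub_sum_mul_star_mul_lt_of_mem_closure_span {e x : A} (he : IsIdempotentElem e)
    (hx : x ∈ closure (TwoSidedIdeal.span {e} : Set A)) {ε : ℝ} (hε : 0 < ε) :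
    ∃ (n : ℕ) (b : Fin n → A), (∀ i, b i * e = b i) ∧ ‖∑ i, b i * star (b i)‖ ≤ 1 ∧
      ‖x - (∑ i, b i * star (b i)) * x‖ < ε := by
  obtain ⟨w, hw, hxw⟩ := Metric.mem_closure_iff.mp hx (ε / 3) (by positivity)
  rw [dist_eq_norm] at hxw
  obtain ⟨n, a, c, rfl⟩ := exists_eq_sum_mul_mul_of_mem_span_singleton he hw
  obtain ⟨δ, hδ, hδε⟩ : ∃ δ > 0, δ * ∑ i, ‖c i‖ < ε / 3 := by
    simpa only [mul_comm] using exists_pos_mul_lt (div_pos hε three_pos) (∑ i, ‖c i‖)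
  obtain ⟨h, hu, hua⟩ := exists_norm_sub_sum_mul_star_mul_le (fun i ↦ a i * e) hδ
  refine ⟨n, fun i ↦ h * (a i * e), fun i ↦ by simp only [mul_assoc, he.eq], hu, ?_⟩
  set u := ∑ i, h * (a i * e) * star (h * (a i * e))
  set w := ∑ i, a i * e * c i with hw_def
  have hw_fixed : ‖w - u * w‖ ≤ δ * ∑ i, ‖c i‖ := by
    rw [hw_def, Finset.mul_sum, ← Finset.sum_sub_distrib, Finset.mul_sum]
    refine norm_sum_le_of_le _ fun i _ ↦ ?_
    rw [← mul_assoc u, ← sub_mul]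
    exact norm_mul_le_of_le (hua i) le_rfl
  have hux : ‖u * (x - w)‖ < ε / 3 :=
    ((norm_mul_le _ _).trans (mul_le_of_le_one_left (norm_nonneg _) hu)).trans_lt hxw
  calc ‖x - u * x‖ = ‖(x - w) + (w - u * w) - u * (x - w)‖ := by
        congr 1
        noncomm_ring
    _ ≤ ‖x - w‖ + ‖w - u * w‖ + ‖u * (x - w)‖ := norm_sub_le_of_le (norm_add_le _ _) le_rfl
    _ < ε := by linarith

lemma exists_sum_mul_star_le_dist_lt {e x : A} (he : IsIdempotentElem e) (hx : 0 ≤ x)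
    (hxI : x ∈ closure (TwoSidedIdeal.span {e} : Set A)) {ε : ℝ} (hε : 0 < ε) :
    ∃ (n : ℕ) (z : Fin n → A), (∀ i, z i * e = z i) ∧ ∑ i, z i * star (z i) ≤ x ∧
      dist x (∑ i, z i * star (z i)) < ε := by
  obtain ⟨n, b, hbe, hb, hbx⟩ := exists_norm_sub_sum_mul_star_mul_lt_of_mem_closure_span he hxI hε
  set u := ∑ i, b i * star (b i)
  have hu : IsSelfAdjoint u := .of_nonneg (Finset.sum_nonneg fun i _ ↦ mul_star_self_nonneg (b i))
  set r := CFC.sqrt x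
  have hr : IsSelfAdjoint r := .of_nonneg (CFC.sqrt_nonneg x)
  have hrr : r * r = x := CFC.sqrt_mul_sqrt_self x
  have hsum : ∑ i, r * b i * star (r * b i) = r * u * r := sum_conjugate_mul_star hr b
  refine ⟨n, fun i ↦ r * b i, fun i ↦ by rw [mul_assoc, hbe], ?_, ?_⟩
  · calc ∑ i, r * b i * star (r * b i) = star r * u * r := by rw [hsum, hr.star_eq]
      _ ≤ ‖u‖ • (star r * r) := CStarAlgebra.star_left_conjugate_le_norm_smul
      _ = ‖u‖ • x := by rw [hr.star_eq, hrr]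
      _ ≤ x := by simpa using smul_le_smul_of_nonneg_right hb hx
  · have hfactor : x - r * u * r = r * (r - u * r) := by rw [mul_sub, hrr, mul_assoc]
    have hsa : IsSelfAdjoint (r * (r - u * r)) := by
      rw [← hfactor]
      exact (IsSelfAdjoint.of_nonneg hx).sub (by simpa [hr.star_eq] using hu.conjugate r)
    calc dist x (∑ i, r * b i * star (r * b i)) = ‖r * (r - u * r)‖ := by
          rw [dist_eq_norm, hsum, hfactor]
      _ ≤ ‖(r - u * r) * r‖ := norm_mul_le_norm_mul_swap hsa
      _ = ‖x - u * x‖ := by rw [sub_mul, mul_assoc, hrr]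
      _ < ε := hbx

theorem trace_eq_sSup_on_ideal_general {φ : A → ℝ≥0∞} (hφ : IsTrace φ) (hφl : IsLSC φ)
    {e : A} (he : IsSelfAdjoint e) (he' : IsIdempotentElem e) {x : A} (hx : 0 ≤ x)
    (hxI : x ∈ closure (TwoSidedIdeal.span {e} : Set A)) :
    φ x = sSup (φ '' {y : A | 0 ≤ y ∧ (∃ a : A, y = e * a * e) ∧ Subequivalent y x}) := by
  refine le_antisymm (hφl.le_of_mem_closure <| Metric.mem_closure_iff.mpr fun ε hε ↦ ?_)
    (sSup_le ?_)
  · obtain ⟨n, z, hze, hzx, hdist⟩ := exists_sum_mul_star_le_dist_lt he' hx hxI hε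
    have hpos : 0 ≤ ∑ i, z i * star (z i) := Finset.sum_nonneg fun i _ ↦ mul_star_self_nonneg (z i)
    refine ⟨_, ⟨hpos, ?_⟩, hdist⟩
    rw [← hφ.map_sum_star_mul_self]
    exact le_sSup ⟨_, ⟨Finset.sum_nonneg fun i _ ↦ star_mul_self_nonneg (z i),
      exists_sum_star_mul_self_eq_mul_mul he hze, _, hpos, hzx, n, z, rfl, rfl⟩, rfl⟩
  · rintro _ ⟨y, ⟨-, -, hyx⟩, rfl⟩
    exact hφ.le_of_subequivalent hyx

end CStarAlgebra

/-- Let `φ` be a lower semicontinuous trace on a C*-algebra `A` and `e` a projection such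
that `φ` is finite on `(eAe)₊`. Then for every positive `x` in the closed two-sided ideal
`AeA` generated by `e`, `φ x = sup { φ y : y ∈ (eAe)₊, y ≼ x }`. -/
theorem trace_eq_sSup_on_ideal {A : Type*} [NonUnitalCStarAlgebra A]
    [PartialOrder A] [StarOrderedRing A]
    (φ : A → ℝ≥0∞) (hφ : IsTrace φ) (hφl : IsLSC φ)
    (e : A) (he₁ : IsSelfAdjoint e) (he₂ : e * e = e)
    (hfin : ∀ x : A, 0 ≤ x → (∃ a : A, x = e * a * e) → φ x < ∞)
    (x : A) (hx : 0 ≤ x) (hxI : x ∈ closure (TwoSidedIdeal.span {e} : Set A)) :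
    φ x = sSup (φ '' {y : A | 0 ≤ y ∧ (∃ a : A, y = e * a * e) ∧ Subequivalent y x}) :=
  trace_eq_sSup_on_ideal_general hφ hφl he₁ he₂ hx hxI
end

section
/- Let A be a C*-algebra with the ideal property. Suppose that for every projection e ∈ A there is given a lower semicontinuous trace φ_e on A such that for any two projections e₁, e₂ ∈ A one has φ_{e₁}(x) = φ_{e₂}(x) for all positive x ∈ (Ae₁A) ∩ (Ae₂A). Then there exists a lower semicontinuous trace φ on A such that φ(x) = φ_e(x) for every projection e ∈ A and every positive x ∈ AeA. -/
open scoped ENNReal NNReal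

/-- A C*-algebra has the ideal property if every closed two-sided ideal is generated, as a
closed two-sided ideal, by the projections it contains. -/
def IdealProperty (A : Type*) [NonUnitalCStarAlgebra A] [PartialOrder A]
    [StarOrderedRing A] : Prop :=
  ∀ I : TwoSidedIdeal A, IsClosed (I : Set A) →
    (I : Set A) =
      closure (TwoSidedIdeal.span {p : A | p ∈ I ∧ IsSelfAdjoint p ∧ p * p = p} : Set A)

/-!
Put `ψ x = sup ∑ φᵢ (bₖ x bₖ*)`, the supremum being over finite families of elements `bₖ` of the
given closed ideals with `∑ bₖ* bₖ ≤ 1`. Each of these sums is additive, homogeneous and lower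
semicontinuous in `x`, so `ψ` is subadditive, homogeneous and lower semicontinuous. The remaining
properties follow from a second description of `ψ`, as the supremum of `∑ φᵢ (uₖ* uₖ)` over finite
families in the ideals with `∑ uₖ* uₖ ≤ x`. To pass from the first to the second, take
`uₖ = bₖ x^{1/2}` and use traciality. Conversely, `bₖ = uₖ r` with `r` an approximate inverse of
`x^{1/2}` satisfies `bₖ x bₖ* = uₖ (r x r) uₖ* → uₖ uₖ*`, and lower semicontinuity applies. In the
second description superadditivity is concatenation of families, and traciality reflects that
`uₖ = bₖ w*` satisfies `uₖ* uₖ = w bₖ* bₖ w*` and `uₖ uₖ* = bₖ (w* w) bₖ*`.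
-/

open Filter Topology

section ApproximateInverse

lemma abs_mul_one_sub_div_sq_le {ε : ℝ} (hε : 0 < ε) (t : ℝ) :
    |t * (1 - (t ^ 2 / (t ^ 2 + ε ^ 2)) ^ 2)| ≤ ε := by
  have hd : 0 < t ^ 2 + ε ^ 2 := by positivity
  set h := t ^ 2 / (t ^ 2 + ε ^ 2) with hh
  have h_nonneg : 0 ≤ h := by positivity
  have h_le_one : h ≤ 1 := (div_le_one hd).2 (by nlinarith)
  have h_compl : 1 - h = ε ^ 2 / (t ^ 2 + ε ^ 2) := by rw [hh]; field_simp; ring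
  calc |t * (1 - h ^ 2)| = |t| * (1 - h) * (1 + h) := by
        rw [abs_mul, abs_of_nonneg (by nlinarith : 0 ≤ 1 - h ^ 2)]; ring
    _ ≤ |t| * (1 - h) * 2 := by gcongr; linarith
    _ = 2 * |t| * ε * ε / (t ^ 2 + ε ^ 2) := by rw [h_compl]; ring
    _ ≤ ε := by
        rw [div_le_iff₀ hd, mul_comm]
        gcongr
        simpa using two_mul_le_add_sq |t| ε

variable {A : Type*} [NonUnitalCStarAlgebra A]

lemma exists_isSelfAdjoint_norm_sub_mul_le {w : A} (hw : IsSelfAdjoint w) {ε : ℝ} (hε : 0 < ε) :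
    ∃ r : A, IsSelfAdjoint r ∧ ‖r * (w * w) * r‖ ≤ 1 ∧ ‖w - w * (r * (w * w) * r)‖ ≤ ε := by
  let f : ℝ → ℝ := fun t ↦ t / (t ^ 2 + ε ^ 2)
  let g : ℝ → ℝ := fun t ↦ (t ^ 2 / (t ^ 2 + ε ^ 2)) ^ 2
  have hd (t : ℝ) : 0 < t ^ 2 + ε ^ 2 := by positivity
  have hf : Continuous f := continuous_id.div (by fun_prop) fun t ↦ (hd t).ne'
  have hg : Continuous g := ((continuous_pow 2).div (by fun_prop) fun t ↦ (hd t).ne').pow 2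
  have _ : f 0 = 0 := by simp [f]
  have _ : g 0 = 0 := by simp [g]
  have hfg : (fun t ↦ f t * (t * t) * f t) = g := by
    ext t
    simp only [f, g]
    ring
  have h_fwwf : cfcₙ f w * (w * w) * cfcₙ f w = cfcₙ g w := by
    rw [← hfg, cfcₙ_mul (fun t ↦ f t * (t * t)) f w, cfcₙ_mul f (fun t ↦ t * t) w,
      cfcₙ_mul (fun t ↦ t) (fun t ↦ t) w, cfcₙ_id' ℝ w]
  have h_sub : w - w * cfcₙ g w = cfcₙ (fun t ↦ t * (1 - g t)) w := by
    simp only [mul_sub, mul_one]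
    rw [cfcₙ_sub (fun t ↦ t) (fun t ↦ t * g t) w, cfcₙ_mul (fun t ↦ t) g w, cfcₙ_id' ℝ w]
  refine ⟨cfcₙ f w, cfcₙ_predicate f w, ?_, ?_⟩ <;> rw [h_fwwf]
  · refine norm_cfcₙ_le fun t _ ↦ ?_
    rw [Real.norm_of_nonneg (by positivity)]
    exact pow_le_one₀ (by positivity) ((div_le_one (hd t)).2 (by nlinarith))
  · rw [h_sub]
    exact norm_cfcₙ_le fun t _ ↦ abs_mul_one_sub_div_sq_le hε t

variable [PartialOrder A] [StarOrderedRing A]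

lemma norm_sub_mul_le_of_star_mul_self_le {a b : A} (hab : star a * a ≤ star b * b) (c : A) :
    ‖a - a * c‖ ≤ ‖b - b * c‖ := by
  obtain ⟨d, hd⟩ := CStarAlgebra.nonneg_iff_eq_star_mul_self.1 (sub_nonneg.2 hab)
  have h_expand (x : A) : star (x - x * c) * (x - x * c) =
      star x * x - star c * (star x * x) - star x * x * c + star c * (star x * x) * c := by
    rw [star_sub, star_mul]
    noncomm_ring
  have h_le : star (a - a * c) * (a - a * c) ≤ star (b - b * c) * (b - b * c) := by
    rw [← sub_nonneg]
    refine (star_mul_self_nonneg (d - d * c)).trans_eq ?_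
    rw [h_expand, h_expand, h_expand, ← hd]
    noncomm_ring
  have h_sq := CStarAlgebra.norm_le_norm_of_nonneg_of_le (star_mul_self_nonneg _) h_le
  rw [CStarRing.norm_star_mul_self, CStarRing.norm_star_mul_self] at h_sq
  exact (mul_self_le_mul_self_iff (norm_nonneg _) (norm_nonneg _)).2 h_sq

lemma exists_seq_tendsto_mul {x : A} (hx : 0 ≤ x) :
    ∃ r : ℕ → A, (∀ n, IsSelfAdjoint (r n)) ∧ (∀ n, ‖r n * x * r n‖ ≤ 1) ∧
      ∀ u : A, star u * u ≤ x → Tendsto (fun n ↦ u * (r n * x * r n)) atTop (𝓝 u) := by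
  obtain ⟨w, hw, rfl⟩ := CStarAlgebra.nonneg_iff_exists_isSelfAdjoint_and_eq_mul_self.1 hx
  choose r hr hr_norm hr_sub using fun n : ℕ ↦
    exists_isSelfAdjoint_norm_sub_mul_le hw (Nat.one_div_pos_of_nat (n := n))
  refine ⟨r, hr, hr_norm, fun u hu ↦ tendsto_iff_norm_sub_tendsto_zero.2 <|
    squeeze_zero (fun _ ↦ norm_nonneg _) (fun n ↦ ?_) tendsto_one_div_add_atTop_nhds_zero_nat⟩
  rw [norm_sub_rev]
  exact (norm_sub_mul_le_of_star_mul_self_le (by rwa [hw.star_eq]) _).trans (hr_sub n)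

end ApproximateInverse

section ClosedIdeal

variable {R : Type*} [NonUnitalNonAssocRing R] [TopologicalSpace R] [SeparatelyContinuousMul R]
  {I : TwoSidedIdeal R}

lemma mul_mem_closure_left (a : R) {b : R} (hb : b ∈ closure (I : Set R)) :
    a * b ∈ closure (I : Set R) :=
  map_mem_closure (continuous_const_mul a) hb fun _ hy ↦ I.mul_mem_left _ _ hy

lemma mul_mem_closure_right {a : R} (b : R) (ha : a ∈ closure (I : Set R)) :
    a * b ∈ closure (I : Set R) :=
  map_mem_closure (f := (· * b)) (continuous_mul_const b) ha fun _ hy ↦ I.mul_mem_right _ _ hy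

lemma mem_closure_of_star_mul_self_mem {A : Type*} [NonUnitalCStarAlgebra A]
    {I : TwoSidedIdeal A} {u : A} (hu : star u * u ∈ closure (I : Set A)) :
    u ∈ closure (I : Set A) := by
  let _ := CStarAlgebra.spectralOrder A
  have := CStarAlgebra.spectralOrderedRing A
  obtain ⟨r, -, -, hr⟩ := exists_seq_tendsto_mul (star_mul_self_nonneg u)
  exact isClosed_closure.mem_of_tendsto (hr u le_rfl) <| .of_forall fun n ↦
    mul_mem_closure_left _ (mul_mem_closure_right _ (mul_mem_closure_left _ hu))

end ClosedIdeal

section Trace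

lemma le_of_tendsto_of_lowerSemicontinuousOn {X κ γ : Type*} [TopologicalSpace X] [LinearOrder γ]
    {f : X → γ} {s : Set X} (hf : LowerSemicontinuousOn f s) {l : Filter κ} [l.NeBot] {y : κ → X}
    {z : X} {c : γ} (hz : z ∈ s) (hy : ∀ n, y n ∈ s) (hlim : Tendsto y l (𝓝 z))
    (hc : ∀ n, f (y n) ≤ c) : f z ≤ c := by
  by_contra! h
  have hlim_within : Tendsto y l (𝓝[s] z) := tendsto_nhdsWithin_iff.2 ⟨hlim, .of_forall hy⟩
  obtain ⟨n, hn⟩ := (hlim_within.eventually (hf z hz c h)).exists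
  exact hn.not_ge (hc n)

variable {A : Type*} [NonUnitalCStarAlgebra A] [PartialOrder A] [StarOrderedRing A]
  {φ : A → ℝ≥0∞}

lemma IsTrace.map_zero_s7 (hφ : IsTrace φ) : φ 0 = 0 := by
  simpa using hφ.smul 0 le_rfl 0

lemma IsTrace.mono_s7 (hφ : IsTrace φ) {x y : A} (hx : 0 ≤ x) (hxy : x ≤ y) : φ x ≤ φ y := by
  have h_add := hφ.add x (y - x) hx (sub_nonneg.2 hxy)
  rw [add_sub_cancel] at h_add
  exact h_add ▸ le_self_add

lemma IsTrace.map_sum_s7 (hφ : IsTrace φ) {κ : Type*} (s : Finset κ) {a : κ → A}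
    (ha : ∀ k, 0 ≤ a k) : φ (∑ k ∈ s, a k) = ∑ k ∈ s, φ (a k) := by
  induction s using Finset.cons_induction with
  | empty => simpa using hφ.map_zero_s7
  | cons k s hk ih =>
    rw [Finset.sum_cons, Finset.sum_cons, hφ.add _ _ (ha k) (Finset.sum_nonneg fun j _ ↦ ha j), ih]

lemma isLSC_iff_lowerSemicontinuousOn : IsLSC φ ↔ LowerSemicontinuousOn φ (Set.Ici 0) := by
  have h_closed : IsClosed (Set.Ici (0 : A)) := CStarAlgebra.isClosed_nonneg
  rw [lowerSemicontinuousOn_iff_preimage_Iic]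
  refine ⟨fun h c ↦ ?_, fun h c ↦ ?_⟩
  · induction c with
    | top => exact ⟨Set.univ, isClosed_univ, by simp⟩
    | coe c => exact ⟨_, h c, by ext; simp +contextual⟩
  · obtain ⟨v, hv, h_eq⟩ := h c
    change IsClosed (Set.Ici 0 ∩ φ ⁻¹' Set.Iic (c : ℝ≥0∞))
    exact h_eq ▸ h_closed.inter hv

end Trace

section GluedTrace

variable {A : Type*} [NonUnitalCStarAlgebra A] {ι : Type*} {I : ι → TwoSidedIdeal A}
  {φ : ι → A → ℝ≥0∞}

/-- A finite column `(bₖ)` of norm at most one, `‖∑ₖ bₖ* bₖ‖ ≤ 1`, whose entries lie in the closures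
of ideals of the family `I`. These columns index the supremum defining `gluedTrace`. Several
entries may be assigned to the same ideal, so that columns can be concatenated. -/
structure ColumnContraction (I : ι → TwoSidedIdeal A) where
  Row : Type
  [fintypeRow : Fintype Row]
  idealIndex : Row → ι
  entry : Row → A
  entry_mem (k : Row) : entry k ∈ closure (I (idealIndex k) : Set A)
  norm_sum_le_one : ‖∑ k, star (entry k) * entry k‖ ≤ 1

namespace ColumnContraction

attribute [instance] fintypeRow

instance : Nonempty (ColumnContraction I) :=
  ⟨{ Row := Empty
     idealIndex := Empty.elim
     entry := Empty.elim
     entry_mem := fun k ↦ k.elim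
     norm_sum_le_one := by simp }⟩

/-- The value at `x` of the functional `x ↦ ∑ₖ φₖ (bₖ x bₖ*)` attached to a column `b`, where `φₖ`
is the trace going with the ideal of the `k`-th entry. -/
noncomputable def compress (φ : ι → A → ℝ≥0∞) (F : ColumnContraction I) (x : A) : ℝ≥0∞ :=
  ∑ k, φ (F.idealIndex k) (F.entry k * x * star (F.entry k))

variable [PartialOrder A] [StarOrderedRing A] (F : ColumnContraction I)

lemma compress_smul (hφ : ∀ i, IsTrace (φ i)) {x : A} (hx : 0 ≤ x) (α : ℝ≥0) :
    F.compress φ ((α : ℝ) • x) = α * F.compress φ x := by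
  simp only [compress, Finset.mul_sum, mul_smul_comm, smul_mul_assoc]
  exact Finset.sum_congr rfl fun k _ ↦ (hφ _).smul _ (star_right_conjugate_nonneg hx _) α

lemma compress_add (hφ : ∀ i, IsTrace (φ i)) {x y : A} (hx : 0 ≤ x) (hy : 0 ≤ y) :
    F.compress φ (x + y) = F.compress φ x + F.compress φ y := by
  simp only [compress, ← Finset.sum_add_distrib, mul_add, add_mul]
  exact Finset.sum_congr rfl fun k _ ↦
    (hφ _).add _ _ (star_right_conjugate_nonneg hx _) (star_right_conjugate_nonneg hy _)

lemma lowerSemicontinuousOn_compress (hφ : ∀ i, IsLSC (φ i)) :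
    LowerSemicontinuousOn (F.compress φ) (Set.Ici 0) :=
  lowerSemicontinuousOn_sum fun k _ ↦ (isLSC_iff_lowerSemicontinuousOn.1 (hφ _)).comp
    (by fun_prop : Continuous fun x ↦ F.entry k * x * star (F.entry k)).continuousOn
    fun _ hx ↦ star_right_conjugate_nonneg hx _

lemma compress_star_mul_self (hφ : ∀ i, IsTrace (φ i)) (w : A) :
    F.compress φ (star w * w) =
      ∑ k, φ (F.idealIndex k) (star (F.entry k * star w) * (F.entry k * star w)) :=
  Finset.sum_congr rfl fun k _ ↦ by
    rw [(hφ _).tracial, star_mul, star_star]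
    simp only [mul_assoc]

lemma sum_star_mul_self_le (w : A) :
    ∑ k, star (F.entry k * star w) * (F.entry k * star w) ≤ w * star w := by
  calc ∑ k, star (F.entry k * star w) * (F.entry k * star w)
      = w * (∑ k, star (F.entry k) * F.entry k) * star w := by
        simp only [star_mul, star_star, Finset.mul_sum, Finset.sum_mul, mul_assoc]
    _ ≤ ‖∑ k, star (F.entry k) * F.entry k‖ • (w * star w) :=
        CStarAlgebra.star_right_conjugate_le_norm_smul
          (.of_nonneg (Finset.sum_nonneg fun k _ ↦ star_mul_self_nonneg _))
    _ ≤ (1 : ℝ) • (w * star w) :=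
        smul_le_smul_of_nonneg_right F.norm_sum_le_one (mul_star_self_nonneg w)
    _ = w * star w := one_smul _ _

lemma exists_sum_star_mul_self_le_compress_eq (hφ : ∀ i, IsTrace (φ i)) {x : A} (hx : 0 ≤ x) :
    ∃ u : F.Row → A, (∀ k, u k ∈ closure (I (F.idealIndex k) : Set A)) ∧
      ∑ k, star (u k) * u k ≤ x ∧
      F.compress φ x = ∑ k, φ (F.idealIndex k) (star (u k) * u k) := by
  obtain ⟨w, hw, rfl⟩ := CStarAlgebra.nonneg_iff_exists_isSelfAdjoint_and_eq_mul_self.1 hx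
  refine ⟨fun k ↦ F.entry k * star w, fun k ↦ mul_mem_closure_right _ (F.entry_mem k), ?_, ?_⟩
  · simpa only [hw.star_eq] using F.sum_star_mul_self_le w
  · simpa only [hw.star_eq] using F.compress_star_mul_self hφ w

end ColumnContraction

/-- The trace glued from the traces `φ i` on the closures of the ideals `I i`: the supremum of
`∑ₖ φₖ (bₖ x bₖ*)` over all finite columns of norm at most one with entries in these closures. -/
noncomputable def gluedTrace (I : ι → TwoSidedIdeal A) (φ : ι → A → ℝ≥0∞) (x : A) : ℝ≥0∞ :=
  ⨆ F : ColumnContraction I, F.compress φ x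

lemma ColumnContraction.compress_le_gluedTrace (F : ColumnContraction I) (x : A) :
    F.compress φ x ≤ gluedTrace I φ x :=
  le_iSup (fun F : ColumnContraction I ↦ F.compress φ x) F

variable [PartialOrder A] [StarOrderedRing A]

lemma isLSC_gluedTrace (hφ : ∀ i, IsLSC (φ i)) : IsLSC (gluedTrace I φ) :=
  isLSC_iff_lowerSemicontinuousOn.2 <|
    lowerSemicontinuousOn_iSup fun F ↦ F.lowerSemicontinuousOn_compress hφ

lemma sum_conjugate_le_gluedTrace {κ : Type} [Fintype κ] {i : κ → ι} {u : κ → A}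
    (hu : ∀ k, u k ∈ closure (I (i k) : Set A)) {x : A} (hux : ∑ k, star (u k) * u k ≤ x)
    {r : A} (hr : IsSelfAdjoint r) (hrx : ‖r * x * r‖ ≤ 1) :
    ∑ k, φ (i k) (u k * (r * x * r) * star (u k)) ≤ gluedTrace I φ x := by
  have h_sum : ∑ k, star (u k * r) * (u k * r) = r * (∑ k, star (u k) * u k) * r := by
    simp only [star_mul, hr.star_eq, Finset.mul_sum, Finset.sum_mul, mul_assoc]
  have h_norm : ‖∑ k, star (u k * r) * (u k * r)‖ ≤ 1 := by
    refine (CStarAlgebra.norm_le_norm_of_nonneg_of_le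
      (Finset.sum_nonneg fun k _ ↦ star_mul_self_nonneg _) ?_).trans hrx
    exact h_sum.trans_le (hr.conjugate_le_conjugate hux)
  let F : ColumnContraction I :=
    { Row := κ
      idealIndex := i
      entry := fun k ↦ u k * r
      entry_mem := fun k ↦ mul_mem_closure_right r (hu k)
      norm_sum_le_one := h_norm }
  calc ∑ k, φ (i k) (u k * (r * x * r) * star (u k)) = F.compress φ x := by
        simp only [F, ColumnContraction.compress, star_mul, hr.star_eq, mul_assoc]
    _ ≤ gluedTrace I φ x := F.compress_le_gluedTrace x

lemma sum_star_mul_self_le_gluedTrace (hφ : ∀ i, IsTrace (φ i)) (hlsc : ∀ i, IsLSC (φ i))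
    {κ : Type} [Fintype κ] {i : κ → ι} {u : κ → A}
    (hu : ∀ k, u k ∈ closure (I (i k) : Set A)) {x : A} (hux : ∑ k, star (u k) * u k ≤ x) :
    ∑ k, φ (i k) (star (u k) * u k) ≤ gluedTrace I φ x := by
  have hx : 0 ≤ x := (Finset.sum_nonneg fun k _ ↦ star_mul_self_nonneg (u k)).trans hux
  obtain ⟨r, hr, hr_norm, hr_lim⟩ := exists_seq_tendsto_mul hx
  have h_single_le (k : κ) : star (u k) * u k ≤ x :=
    (Finset.single_le_sum (f := fun k ↦ star (u k) * u k)
      (fun k _ ↦ star_mul_self_nonneg (u k)) (Finset.mem_univ k)).trans hux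
  have h_lsc : LowerSemicontinuousOn (fun a : κ → A ↦ ∑ k, φ (i k) (a k)) (Set.Ici 0) :=
    lowerSemicontinuousOn_sum fun k _ ↦ (isLSC_iff_lowerSemicontinuousOn.1 (hlsc (i k))).comp
      (continuous_apply k).continuousOn fun _ ha ↦ ha k
  have h_lim : Tendsto (fun n k ↦ u k * (r n * x * r n) * star (u k)) atTop
      (𝓝 fun k ↦ u k * star (u k)) :=
    tendsto_pi_nhds.2 fun k ↦ (hr_lim (u k) (h_single_le k)).mul_const _
  simp only [(hφ _).tracial]
  exact le_of_tendsto_of_lowerSemicontinuousOn h_lsc (fun k ↦ mul_star_self_nonneg (u k))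
    (fun n k ↦ star_right_conjugate_nonneg ((hr n).conjugate_nonneg hx) _) h_lim
    fun n ↦ sum_conjugate_le_gluedTrace hu hux (hr n) (hr_norm n)

lemma gluedTrace_star_mul_self_le (hφ : ∀ i, IsTrace (φ i)) (hlsc : ∀ i, IsLSC (φ i)) (w : A) :
    gluedTrace I φ (star w * w) ≤ gluedTrace I φ (w * star w) :=
  iSup_le fun F ↦ (F.compress_star_mul_self hφ w).trans_le <|
    sum_star_mul_self_le_gluedTrace hφ hlsc
      (fun k ↦ mul_mem_closure_right _ (F.entry_mem k)) (F.sum_star_mul_self_le w)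

lemma gluedTrace_smul (hφ : ∀ i, IsTrace (φ i)) {x : A} (hx : 0 ≤ x) (α : ℝ≥0) :
    gluedTrace I φ ((α : ℝ) • x) = α * gluedTrace I φ x := by
  simp only [gluedTrace, ENNReal.mul_iSup, ColumnContraction.compress_smul _ hφ hx]

lemma gluedTrace_add_le (hφ : ∀ i, IsTrace (φ i)) {x y : A} (hx : 0 ≤ x) (hy : 0 ≤ y) :
    gluedTrace I φ (x + y) ≤ gluedTrace I φ x + gluedTrace I φ y :=
  iSup_le fun F ↦ (F.compress_add hφ hx hy).trans_le <|
    add_le_add (F.compress_le_gluedTrace x) (F.compress_le_gluedTrace y)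

lemma add_gluedTrace_le (hφ : ∀ i, IsTrace (φ i)) (hlsc : ∀ i, IsLSC (φ i)) {x y : A}
    (hx : 0 ≤ x) (hy : 0 ≤ y) :
    gluedTrace I φ x + gluedTrace I φ y ≤ gluedTrace I φ (x + y) := by
  refine ENNReal.iSup_add_iSup_le fun F G ↦ ?_
  obtain ⟨u, hu, hu_le, hF⟩ := F.exists_sum_star_mul_self_le_compress_eq hφ hx
  obtain ⟨v, hv, hv_le, hG⟩ := G.exists_sum_star_mul_self_le_compress_eq hφ hy
  have h_mem : ∀ k, Sum.elim u v k ∈ closure (I (Sum.elim F.idealIndex G.idealIndex k) : Set A) :=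
    Sum.rec hu hv
  have h_le : ∑ k, star (Sum.elim u v k) * Sum.elim u v k ≤ x + y := by
    simpa using add_le_add hu_le hv_le
  simpa [hF, hG] using sum_star_mul_self_le_gluedTrace hφ hlsc h_mem h_le

lemma isTrace_gluedTrace (hφ : ∀ i, IsTrace (φ i)) (hlsc : ∀ i, IsLSC (φ i)) :
    IsTrace (gluedTrace I φ) where
  smul _ hx α := gluedTrace_smul hφ hx α
  add _ _ hx hy := le_antisymm (gluedTrace_add_le hφ hx hy) (add_gluedTrace_le hφ hlsc hx hy)
  tracial x := le_antisymm (gluedTrace_star_mul_self_le hφ hlsc x)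
    (by simpa using gluedTrace_star_mul_self_le hφ hlsc (star x))

lemma le_gluedTrace_of_mem_closure (hφ : ∀ i, IsTrace (φ i)) (hlsc : ∀ i, IsLSC (φ i))
    {i : ι} {x : A} (hx : 0 ≤ x) (hxi : x ∈ closure (I i : Set A)) : φ i x ≤ gluedTrace I φ x := by
  obtain ⟨u, rfl⟩ := CStarAlgebra.nonneg_iff_eq_star_mul_self.1 hx
  simpa using sum_star_mul_self_le_gluedTrace hφ hlsc (κ := Unit) (i := fun _ ↦ i)
    (u := fun _ ↦ u) (fun _ ↦ mem_closure_of_star_mul_self_mem hxi) (by simp)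

lemma gluedTrace_le_of_mem_closure (hφ : ∀ i, IsTrace (φ i))
    (hcomp : ∀ i j x, 0 ≤ x → x ∈ closure (I i : Set A) → x ∈ closure (I j : Set A) →
      φ i x = φ j x)
    {i : ι} {x : A} (hx : 0 ≤ x) (hxi : x ∈ closure (I i : Set A)) :
    gluedTrace I φ x ≤ φ i x := by
  refine iSup_le fun F ↦ ?_
  have h_compress : F.compress φ x = F.compress (fun _ ↦ φ i) x :=
    Finset.sum_congr rfl fun k _ ↦ hcomp _ _ _ (star_right_conjugate_nonneg hx _)
      (mul_mem_closure_right _ (mul_mem_closure_right _ (F.entry_mem k)))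
      (mul_mem_closure_right _ (mul_mem_closure_left _ hxi))
  obtain ⟨u, -, hu_le, h_eq⟩ := F.exists_sum_star_mul_self_le_compress_eq (fun _ ↦ hφ i) hx
  rw [h_compress, h_eq, ← (hφ i).map_sum_s7 _ fun _ ↦ star_mul_self_nonneg _]
  exact (hφ i).mono_s7 (Finset.sum_nonneg fun _ _ ↦ star_mul_self_nonneg _) hu_le

theorem exists_trace_glueing_general (I : ι → TwoSidedIdeal A) (φ : ι → A → ℝ≥0∞)
    (hφ : ∀ i, IsTrace (φ i)) (hlsc : ∀ i, IsLSC (φ i))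
    (hcomp : ∀ i j x, 0 ≤ x → x ∈ closure (I i : Set A) → x ∈ closure (I j : Set A) →
      φ i x = φ j x) :
    ∃ ψ : A → ℝ≥0∞, IsTrace ψ ∧ IsLSC ψ ∧
      ∀ i x, 0 ≤ x → x ∈ closure (I i : Set A) → ψ x = φ i x :=
  ⟨gluedTrace I φ, isTrace_gluedTrace hφ hlsc, isLSC_gluedTrace hlsc, fun _ _ hx hxi ↦
    le_antisymm (gluedTrace_le_of_mem_closure hφ hcomp hx hxi)
      (le_gluedTrace_of_mem_closure hφ hlsc hx hxi)⟩

end GluedTrace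

/-- Let `A` be a C*-algebra with the ideal property. Suppose that for every projection
`e ∈ A` there is a lower semicontinuous trace `φ e` on `A` such that for any two
projections `e₁, e₂` one has `φ e₁ x = φ e₂ x` for all positive `x ∈ (Ae₁A) ∩ (Ae₂A)`.
Then there exists a lower semicontinuous trace `ψ` on `A` with `ψ x = φ e x` for every
projection `e` and every positive `x ∈ AeA`. -/
theorem exists_trace_glueing {A : Type*} [NonUnitalCStarAlgebra A] [PartialOrder A]
    [StarOrderedRing A] (hA : IdealProperty A)
    (φ : A → A → ℝ≥0∞)
    (htr : ∀ e : A, IsSelfAdjoint e → e * e = e → IsTrace (φ e) ∧ IsLSC (φ e))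
    (hcomp : ∀ e₁ e₂ : A, IsSelfAdjoint e₁ → e₁ * e₁ = e₁ → IsSelfAdjoint e₂ → e₂ * e₂ = e₂ →
      ∀ x : A, 0 ≤ x → x ∈ closure (TwoSidedIdeal.span {e₁} : Set A) →
        x ∈ closure (TwoSidedIdeal.span {e₂} : Set A) → φ e₁ x = φ e₂ x) :
    ∃ ψ : A → ℝ≥0∞, IsTrace ψ ∧ IsLSC ψ ∧
      ∀ e : A, IsSelfAdjoint e → e * e = e →
        ∀ x : A, 0 ≤ x → x ∈ closure (TwoSidedIdeal.span {e} : Set A) → ψ x = φ e x := by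
  obtain ⟨ψ, hψ, hψ_lsc, h_eq⟩ := exists_trace_glueing_general
    (fun e : {e : A // IsSelfAdjoint e ∧ e * e = e} ↦ TwoSidedIdeal.span {e.1}) (fun e ↦ φ e.1)
    (fun e ↦ (htr e.1 e.2.1 e.2.2).1) (fun e ↦ (htr e.1 e.2.1 e.2.2).2)
    fun e₁ e₂ ↦ hcomp e₁.1 e₂.1 e₁.2.1 e₁.2.2 e₂.2.1 e₂.2.2
  exact ⟨ψ, hψ, hψ_lsc, fun e he hee ↦ h_eq ⟨e, he, hee⟩⟩
end
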